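/- (Classical Vietoris-Rips Lemma.) Let d ≥ 1, let σ be a finite nonempty set of points in ℝ^d, let t > 0, and let 0 < t' ≤ t·(√(2d/(d+1)))^{-1}. If ‖x − y‖ ≤ 2t' for all distinct x, y ∈ σ, then the intersection ⋂_{x ∈ σ} B̄(x, t) of the closed balls of radius t centered at the points of σ is nonempty. -/

import Mathlib

/-- The variance of a finitely supported probability measure is half the weighted sum of the
squared pairwise distances. -/
lemma two_mul_weighted_variance_eq {ι E : Type*} [Fintype ι] [NormedAddCommGroup E]
    [InnerProductSpace ℝ E] (x : ι → E) (w : ι → ℝ) (hw : ∑ i, w i = 1) :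
    2 * (∑ i, w i * ‖x i‖ ^ 2 - ‖∑ i, w i • x i‖ ^ 2) =
      ∑ i, ∑ j, w i * w j * ‖x i - x j‖ ^ 2 := by
  have hc : ‖∑ i, w i • x i‖ ^ 2 = ∑ i, ∑ j, w i * w j * inner ℝ (x i) (x j) := by
    rw [← real_inner_self_eq_norm_sq, sum_inner]
    refine Finset.sum_congr rfl fun i _ => ?_
    rw [inner_sum]
    refine Finset.sum_congr rfl fun j _ => ?_
    rw [real_inner_smul_left, real_inner_smul_right, mul_assoc]
  have h1 : ∑ i, ∑ j, w i * w j * ‖x i‖ ^ 2 = ∑ i, w i * ‖x i‖ ^ 2 := by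
    refine Finset.sum_congr rfl fun i _ => ?_
    rw [← Finset.sum_mul, ← Finset.mul_sum, hw, mul_one]
  have h2 : ∑ i, ∑ j, w i * w j * ‖x j‖ ^ 2 = ∑ i, w i * ‖x i‖ ^ 2 := by
    rw [Finset.sum_comm, ← h1]
    refine Finset.sum_congr rfl fun i _ => Finset.sum_congr rfl fun j _ => ?_
    rw [mul_comm (w j)]
  have h3 : ∑ i, ∑ j, w i * w j * ‖x i - x j‖ ^ 2 =
      ∑ i, ∑ j, w i * w j * ‖x i‖ ^ 2 + ∑ i, ∑ j, w i * w j * ‖x j‖ ^ 2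
        - 2 * ∑ i, ∑ j, w i * w j * inner ℝ (x i) (x j) := by
    simp only [Finset.mul_sum, ← Finset.sum_add_distrib, ← Finset.sum_sub_distrib]
    refine Finset.sum_congr rfl fun i _ => Finset.sum_congr rfl fun j _ => ?_
    rw [norm_sub_sq_real]
    ring
  rw [h3, h1, h2, hc]
  ring

/-- A family of `n` points with pairwise distances at most `D` has variance at most
`D² / 2 * (1 - 1 / n)` with respect to any weights. -/
lemma weighted_variance_le {ι E : Type*} [Fintype ι] [Nonempty ι] [NormedAddCommGroup E]
    [InnerProductSpace ℝ E] (x : ι → E) {D : ℝ} (hD : ∀ i j, ‖x i - x j‖ ≤ D)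
    {w : ι → ℝ} (hw : w ∈ stdSimplex ℝ ι) :
    ∑ i, w i * ‖x i‖ ^ 2 - ‖∑ i, w i • x i‖ ^ 2 ≤ D ^ 2 / 2 * (1 - 1 / Fintype.card ι) := by
  classical
  have hpair : ∑ i, ∑ j, w i * w j * ‖x i - x j‖ ^ 2 ≤
      ∑ i, ∑ j, w i * w j * (D ^ 2 * (1 - if i = j then 1 else 0)) := by
    refine Finset.sum_le_sum fun i _ => Finset.sum_le_sum fun j _ =>
      mul_le_mul_of_nonneg_left ?_ (mul_nonneg (hw.1 i) (hw.1 j))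
    split_ifs with hij
    · simp [hij]
    · rw [sub_zero, mul_one]
      exact pow_le_pow_left₀ (norm_nonneg _) (hD i j) 2
  have hsum : ∑ i, ∑ j, w i * w j * (D ^ 2 * (1 - if i = j then 1 else 0)) =
      D ^ 2 * (1 - ∑ i, w i ^ 2) := by
    have hterm : ∀ i j, w i * w j * (D ^ 2 * (1 - if i = j then (1 : ℝ) else 0)) =
        D ^ 2 * (w i * w j) - if i = j then D ^ 2 * w i ^ 2 else 0 := by
      intro i j
      split_ifs with hij
      · subst hij; ring
      · ring
    simp only [hterm, Finset.sum_sub_distrib, ← Finset.mul_sum, hw.2, Finset.sum_ite_eq,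
      Finset.mem_univ, if_true, mul_one]
    ring
  have hcs : 1 / (Fintype.card ι : ℝ) ≤ ∑ i, w i ^ 2 := by
    have h := sq_sum_le_card_mul_sum_sq (s := Finset.univ) (f := w)
    rw [hw.2, one_pow, Finset.card_univ] at h
    rw [div_le_iff₀ (by exact_mod_cast Fintype.card_pos), mul_comm]
    exact h
  have hvar := two_mul_weighted_variance_eq x w hw.2
  have := mul_le_mul_of_nonneg_left hcs (sq_nonneg D)
  linarith

/-- There are weights whose barycenter `c` satisfies: the squared distance of every point to `c`
is at most the variance. -/
lemma exists_weights_dist_sq_le_variance {ι E : Type*} [Fintype ι] [Nonempty ι]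
    [NormedAddCommGroup E] [InnerProductSpace ℝ E] (x : ι → E) :
    ∃ w ∈ stdSimplex ℝ ι, ∀ k, ‖x k - ∑ i, w i • x i‖ ^ 2 ≤
      ∑ i, w i * ‖x i‖ ^ 2 - ‖∑ i, w i • x i‖ ^ 2 := by
  classical
  obtain ⟨w, hw, hmax⟩ := (isCompact_stdSimplex ℝ ι).exists_isMaxOn
    ⟨_, single_mem_stdSimplex ℝ (Classical.arbitrary ι)⟩
    (f := fun w : ι → ℝ => ∑ i, w i * ‖x i‖ ^ 2 - ‖∑ i, w i • x i‖ ^ 2)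
    (by fun_prop)
  refine ⟨w, hw, fun k => ?_⟩
  set A := ∑ i, w i * ‖x i‖ ^ 2 with hA
  set c := ∑ i, w i • x i with hc
  have key : ∀ s : ℝ, 0 < s → s ≤ 1 → (1 - s) * ‖x k - c‖ ^ 2 ≤ A - ‖c‖ ^ 2 := by
    intro s hs hs1
    have hv := hmax (convex_stdSimplex ℝ ι hw (single_mem_stdSimplex ℝ k)
      (sub_nonneg.2 hs1) hs.le (by ring))
    have hA' : ∑ i, ((1 - s) • w + s • Pi.single k 1 : ι → ℝ) i * ‖x i‖ ^ 2 =
        (1 - s) * A + s * ‖x k‖ ^ 2 := by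
      simp [add_mul, Finset.sum_add_distrib, hA, Finset.mul_sum, mul_assoc, Pi.single_apply]
    have hc' : ∑ i, ((1 - s) • w + s • Pi.single k 1 : ι → ℝ) i • x i =
        (1 - s) • c + s • x k := by
      simp [add_smul, Finset.sum_add_distrib, hc, Finset.smul_sum, mul_smul, Pi.single_apply]
    simp only [Set.mem_ofPred_eq] at hv
    rw [hA', hc', norm_add_sq_real, norm_smul, norm_smul, real_inner_smul_left,
      real_inner_smul_right, mul_pow, mul_pow, Real.norm_eq_abs, Real.norm_eq_abs, sq_abs,
      sq_abs] at hv
    rw [norm_sub_sq_real, real_inner_comm]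
    refine le_of_mul_le_mul_left ?_ hs
    linarith
  by_contra! hlt
  set q := ‖x k - c‖ ^ 2
  set f := A - ‖c‖ ^ 2
  have hf : 0 ≤ f := by simpa using key 1 one_pos le_rfl
  have hq : 0 < q := hf.trans_lt hlt
  have h := key ((q - f) / (2 * q)) (by apply div_pos <;> linarith)
    (by rw [div_le_one (by positivity)]; linarith)
  have : (1 - (q - f) / (2 * q)) * q = (q + f) / 2 := by
    field_simp
    ring
  linarith

/-- **Jung's theorem** for a family of `n` points: if the pairwise distances are at most `D`,
some ball of squared radius `D² / 2 * (1 - 1 / n)` contains all points. -/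
lemma exists_center_dist_sq_le {ι E : Type*} [Fintype ι] [Nonempty ι] [NormedAddCommGroup E]
    [InnerProductSpace ℝ E] (x : ι → E) {D : ℝ} (hD : ∀ i j, ‖x i - x j‖ ≤ D) :
    ∃ c, ∀ k, ‖x k - c‖ ^ 2 ≤ D ^ 2 / 2 * (1 - 1 / Fintype.card ι) := by
  obtain ⟨w, hw, h⟩ := exists_weights_dist_sq_le_variance x
  exact ⟨_, fun k => (h k).trans (weighted_variance_le x hD hw)⟩

/-- Classical Vietoris-Rips Lemma: if a finite set `σ` of points of `ℝ^d` has diameter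
at most `2t'`, where `0 < t' ≤ t·(√(2d/(d+1)))⁻¹`, then the closed balls of radius `t`
centered at the points of `σ` have a common point. -/
theorem classical_vietoris_rips_lemma {d : ℕ} (hd : 1 ≤ d)
    (σ : Finset (EuclideanSpace ℝ (Fin d))) (hσ : σ.Nonempty)
    (t t' : ℝ) (ht : 0 < t) (ht'pos : 0 < t')
    (ht' : t' ≤ t * (Real.sqrt (2 * d / (d + 1)))⁻¹)
    (hVR : ∀ x ∈ σ, ∀ y ∈ σ, x ≠ y → ‖x - y‖ ≤ 2 * t') :
    (⋂ x ∈ σ, Metric.closedBall x t).Nonempty := by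
  have hd0 : (0 : ℝ) < d := by exact_mod_cast hd
  refine Convex.helly_theorem' (𝕜 := ℝ) (fun x _ => convex_closedBall x t) fun I hI hcard => ?_
  rw [finrank_euclideanSpace_fin] at hcard
  obtain rfl | hne := I.eq_empty_or_nonempty
  · simp
  have : Nonempty I := hne.to_subtype
  obtain ⟨c, hc⟩ := exists_center_dist_sq_le (fun i : I => (i : EuclideanSpace ℝ (Fin d)))
    (D := 2 * t') fun i j => by
      by_cases hij : (i : EuclideanSpace ℝ (Fin d)) = j
      · simp [hij, ht'pos.le]
      · exact hVR _ (hI i.2) _ (hI j.2) hij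
  have hscale : t' ^ 2 * (2 * d / (d + 1)) ≤ t ^ 2 := by
    have hr : (0 : ℝ) < 2 * d / (d + 1) := by positivity
    rw [← div_eq_mul_inv, le_div_iff₀ (Real.sqrt_pos.2 hr)] at ht'
    calc t' ^ 2 * (2 * d / (d + 1)) = (t' * Real.sqrt (2 * d / (d + 1))) ^ 2 := by
          rw [mul_pow, Real.sq_sqrt hr.le]
      _ ≤ t ^ 2 := pow_le_pow_left₀ (by positivity) ht' 2
  have hbound : (2 * t') ^ 2 / 2 * (1 - 1 / (Fintype.card I : ℝ)) ≤
      t' ^ 2 * (2 * d / (d + 1)) := by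
    have hpos : (0 : ℝ) < Fintype.card I := by exact_mod_cast Fintype.card_pos
    have hle : (Fintype.card I : ℝ) ≤ d + 1 := by
      rw [Fintype.card_coe]; exact_mod_cast hcard
    have hinv : 1 / ((d : ℝ) + 1) ≤ 1 / (Fintype.card I : ℝ) :=
      one_div_le_one_div_of_le hpos hle
    calc (2 * t') ^ 2 / 2 * (1 - 1 / (Fintype.card I : ℝ))
        ≤ (2 * t') ^ 2 / 2 * (1 - 1 / ((d : ℝ) + 1)) := by gcongr
      _ = t' ^ 2 * (2 * d / (d + 1)) := by field_simp; ring
  refine ⟨c, Set.mem_iInter₂.2 fun x hx => ?_⟩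
  rw [Metric.mem_closedBall, dist_comm, dist_eq_norm]
  exact le_of_sq_le_sq ((hc ⟨x, hx⟩).trans (hbound.trans hscale)) ht.le
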